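/- (Theorem 1(ii)) For every l ∈ ℤ and every x ∈ ℂ at which the vectors |x⟩⁺_l, |q⁻¹x⟩⁺_l, |qx⟩⁺_l are defined, the normalized transfer matrix satisfies q^{−l}·T(x)·|x⟩⁺_l = |q⁻¹x⟩⁺_l·∏_{j=0}^{L−1}(1 − xc*_jq⁻¹) + |qx⟩⁺_l·∏_{j=0}^{L−1}(1 + xc*_j). -/

import Mathlib

/-!
Since `ω = q²` and `q` is a primitive `N`-th root of unity, definedness at `x` gives
`(x c*_j)^N ≠ 1`, so that no factor `1 - x c*_j qⁿ` vanishes (`Gen`).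

The vector `|x,l⟩` is a pure tensor. Applying the `j`-th `L`-operator to its `j`-th factor gives, at
each slot index `k_j`, a scalar `2 × 2` matrix. The recursion of the factor in `k_j` (`site_cyclic`)
says that this matrix is triangular in the gauge given by the row `(1, q^l)` and the column
`(-q^l, 1)`, independently of `j` and `k_j`. The trace of the product is therefore the sum of two
products of eigenvalues (`trace_prod_of_triangular`), and these eigenvalues are slot factors of
`|q⁻¹x,l-1⟩` and `|qx,l-1⟩` (`site_up`, `site_down`). This yields (`transfer_ket`)
`T(x)|x,l⟩ = ∏(1 - x c*_j q^l) |q⁻¹x,l-1⟩ + ∏(1 - (x c*_j)²)/(1 - x c*_j q^{-l}) |qx,l-1⟩`.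
Summing over odd `l`, the coefficients of `|x⟩ᵒ_l` turn into those of `|q^{±1}x⟩ᵉ_l`
(`transfer_keto`).

Everything is `N`-periodic and `N` is odd, so the even and odd sums are the same sum up to a shift
of the index by `M + 1`; the normalization `u` is such that
`q^{-l} u(qx) |x⟩ᵉ_l = u(x) |x⟩ᵒ_l` (`uu_kete_eq`). Thus `|x⟩⁺_l = 2 u(x) |x⟩ᵒ_l`, while
`|q^{±1}x⟩⁺_l` is written with its even part, and the claim follows from `transfer_keto` and
the telescoping relation between `u(x)` and `u(q²x)` (`uu_sq_shift`).
-/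

open Matrix Polynomial

noncomputable section

/-- The operator `Z` on `ℂ^N`: `(Zv)_k = ω^k v_k`. -/
def Zop (N : ℕ) (ω : ℂ) : Matrix (ZMod N) (ZMod N) ℂ :=
  Matrix.diagonal fun k => ω ^ k.val

/-- The operator `X` on `ℂ^N`: `(Xv)_k = v_{k-1}`. -/
def Xop (N : ℕ) : Matrix (ZMod N) (ZMod N) ℂ :=
  Matrix.of fun k k' => if k' = k - 1 then 1 else 0

/-- The operator `Y := Z * X` on `ℂ^N`. -/
def Yop (N : ℕ) [NeZero N] (ω : ℂ) : Matrix (ZMod N) (ZMod N) ℂ :=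
  Zop N ω * Xop N

/-- The `L`-operator `L_h(x)`, a 2×2 matrix of operators on `ℂ^N`, for
`h = (a,b,c,d) ∈ ℂ⁴`: first row `(aY, xbX)`, second row `(xcZ, d·I)`. -/
def Lop (N : ℕ) [NeZero N] (ω : ℂ) (h : ℂ × ℂ × ℂ × ℂ) (x : ℂ) :
    Matrix (Fin 2) (Fin 2) (Matrix (ZMod N) (ZMod N) ℂ) :=
  Matrix.of
    ![![h.1 • Yop N ω, (x * h.2.1) • Xop N],
      ![(x * h.2.2.1) • Zop N ω, h.2.2.2 • (1 : Matrix (ZMod N) (ZMod N) ℂ)]]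

/-- Embedding of an operator on `ℂ^N` as an operator on `⊗^L ℂ^N` acting on the `j`-th
tensor slot. -/
def emb (N L : ℕ) [NeZero N] [NeZero L] (j : ZMod L) (A : Matrix (ZMod N) (ZMod N) ℂ) :
    Matrix (ZMod L → ZMod N) (ZMod L → ZMod N) ℂ :=
  Matrix.of fun k k' =>
    A (k j) (k' j) * ∏ i ∈ Finset.univ.erase j, (if k i = k' i then (1 : ℂ) else 0)

/-- The monodromy matrix `L_{h⃗}(x) = L_{h₀}(x) ⋯ L_{h_{L-1}}(x)`, a 2×2 matrix of
operators on `⊗^L ℂ^N`, the operator entries of the `j`-th factor acting on the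
`j`-th tensor slot. -/
def mono (N L : ℕ) [NeZero N] [NeZero L] (ω : ℂ) (h : ZMod L → ℂ × ℂ × ℂ × ℂ) (x : ℂ) :
    Matrix (Fin 2) (Fin 2) (Matrix (ZMod L → ZMod N) (ZMod L → ZMod N) ℂ) :=
  ((List.finRange L).map fun j =>
    (Lop N ω (h ((j : ℕ) : ZMod L)) x).map (emb N L ((j : ℕ) : ZMod L))).prod

/-- The transfer matrix `T_{h⃗}(x)`: the trace of the monodromy matrix over the 2×2
auxiliary indices. -/
def transfer (N L : ℕ) [NeZero N] [NeZero L] (ω : ℂ) (h : ZMod L → ℂ × ℂ × ℂ × ℂ)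
    (x : ℂ) : Matrix (ZMod L → ZMod N) (ZMod L → ZMod N) ℂ :=
  mono N L ω h x 0 0 + mono N L ω h x 1 1

/-- The q-shifted factorial `(a; s)_n = (1−a)(1−as)⋯(1−as^{n−1})`. -/
def qsf (a s : ℂ) (n : ℕ) : ℂ :=
  ∏ i ∈ Finset.range n, (1 - a * s ^ i)

/-- The vector `|x,l⟩ ∈ ⊗^Lℂ^N` with components
`⟨k₀,…,k_{L−1}|x,l⟩ = q^{Σk_j²} ∏_j (xc*_jq^{−l−2};ω⁻¹)_{k_j}/(xc*_jq^{l+2};ω)_{k_j}`. -/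
def ket (N L : ℕ) [NeZero L] (ω q : ℂ) (cstar : ZMod L → ℂ) (x : ℂ) (l : ℤ) :
    (ZMod L → ZMod N) → ℂ :=
  fun k => q ^ (∑ j : ZMod L, ((k j).val) ^ 2) *
    ∏ j : ZMod L,
      qsf (x * cstar j * q ^ (-l - 2)) ω⁻¹ ((k j).val) /
        qsf (x * cstar j * q ^ (l + 2)) ω ((k j).val)

/-- All denominators occurring in the components of `|x,l⟩` are nonzero. -/
def ketDefined (N L : ℕ) [NeZero L] (ω q : ℂ) (cstar : ZMod L → ℂ) (x : ℂ) (l : ℤ) :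
    Prop :=
  ∀ (j : ZMod L) (n : ℕ), n < N → qsf (x * cstar j * q ^ (l + 2)) ω n ≠ 0

/-- `f^e(x,2n) = ∏_j (xc*_j;ω⁻¹)_{n+1}/(xc*_j;ω)_{n+1}`. -/
def fe (L : ℕ) [NeZero L] (ω : ℂ) (cstar : ZMod L → ℂ) (x : ℂ) (n : ℕ) : ℂ :=
  ∏ j : ZMod L, qsf (x * cstar j) ω⁻¹ (n + 1) / qsf (x * cstar j) ω (n + 1)

/-- `f^o(x,2n+1) = ∏_j (xc*_jq⁻¹;ω⁻¹)_{n+1}/(xc*_jq;ω)_{n+1}`. -/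
def fo (L : ℕ) [NeZero L] (ω q : ℂ) (cstar : ZMod L → ℂ) (x : ℂ) (n : ℕ) : ℂ :=
  ∏ j : ZMod L, qsf (x * cstar j * q⁻¹) ω⁻¹ (n + 1) / qsf (x * cstar j * q) ω (n + 1)

/-- `|x⟩ᵉ_l = Σ_{n=0}^{N−1} |x,2n⟩ f^e(x,2n) ω^{ln}`. -/
def kete (N L : ℕ) [NeZero L] (ω q : ℂ) (cstar : ZMod L → ℂ) (x : ℂ) (l : ℤ) :
    (ZMod L → ZMod N) → ℂ :=
  ∑ n ∈ Finset.range N,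
    (fe L ω cstar x n * ω ^ (l * (n : ℤ))) • ket N L ω q cstar x (2 * (n : ℤ))

/-- `|x⟩ᵒ_l = Σ_{n=0}^{N−1} |x,2n+1⟩ f^o(x,2n+1) ω^{ln}`. -/
def keto (N L : ℕ) [NeZero L] (ω q : ℂ) (cstar : ZMod L → ℂ) (x : ℂ) (l : ℤ) :
    (ZMod L → ZMod N) → ℂ :=
  ∑ n ∈ Finset.range N,
    (fo L ω q cstar x n * ω ^ (l * (n : ℤ))) • ket N L ω q cstar x (2 * (n : ℤ) + 1)

/-- `u(x) = ∏_j (1−x^Nc*_j^N)(xc*_jq;q²)_M`. -/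
def uu (N M L : ℕ) [NeZero L] (q : ℂ) (cstar : ZMod L → ℂ) (x : ℂ) : ℂ :=
  ∏ j : ZMod L, (1 - x ^ N * cstar j ^ N) * qsf (x * cstar j * q) (q ^ 2) M

/-- `|x⟩⁺_l = |x⟩ᵉ_l q^{−l} u(qx) + |x⟩ᵒ_l u(x)`. -/
def ketp (N M L : ℕ) [NeZero L] (ω q : ℂ) (cstar : ZMod L → ℂ) (x : ℂ) (l : ℤ) :
    (ZMod L → ZMod N) → ℂ :=
  (q ^ (-l) * uu N M L q cstar (q * x)) • kete N L ω q cstar x l +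
    uu N M L q cstar x • keto N L ω q cstar x l

/-- All the q-shifted-factorial denominators occurring in `|x⟩ᵉ_l`, `|x⟩ᵒ_l`
(hence in `|x⟩⁺_l`) are nonzero. -/
def allDef (N L : ℕ) [NeZero L] (ω q : ℂ) (cstar : ZMod L → ℂ) (x : ℂ) : Prop :=
  (∀ n : ℕ, n < N → ketDefined N L ω q cstar x (2 * (n : ℤ)) ∧
      ketDefined N L ω q cstar x (2 * (n : ℤ) + 1)) ∧
  ∀ (j : ZMod L) (n : ℕ), n < N →
    qsf (x * cstar j) ω (n + 1) ≠ 0 ∧ qsf (x * cstar j * q) ω (n + 1) ≠ 0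

/-! ### Shifted factorials -/

lemma qsf_zero (a s : ℂ) : qsf a s 0 = 1 := by simp [qsf]

lemma qsf_succ (a s : ℂ) (n : ℕ) : qsf a s (n + 1) = qsf a s n * (1 - a * s ^ n) := by
  simp [qsf, Finset.prod_range_succ]

lemma qsf_succ' (a s : ℂ) (n : ℕ) : qsf a s (n + 1) = (1 - a) * qsf (a * s) s n := by
  simp only [qsf, Finset.prod_range_succ', pow_zero, mul_one]
  rw [mul_comm]
  congr 1
  exact Finset.prod_congr rfl fun i _ => by ring

lemma qsf_add (a s : ℂ) (m n : ℕ) : qsf a s (m + n) = qsf a s m * qsf (a * s ^ m) s n := by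
  simp only [qsf, Finset.prod_range_add]
  congr 1
  exact Finset.prod_congr rfl fun i _ => by ring

/-- Over a full period the factors run through `∏_ζ (1 - aζ)`, `ζ^N = 1`. -/
lemma qsf_full {N : ℕ} [NeZero N] {s : ℂ} (hs : IsPrimitiveRoot s N) (a : ℂ) :
    qsf a s N = 1 - a ^ N := by
  have h := hs.pow_sub_pow_eq_prod_sub_mul 1 a (NeZero.pos N)
  rw [one_pow] at h
  rw [h, qsf]
  have him : nthRootsFinset N (1 : ℂ) = (Finset.range N).image (fun i => s ^ i) := by
    symm
    apply Finset.eq_of_subset_of_card_le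
    · intro z hz
      obtain ⟨i, -, rfl⟩ := Finset.mem_image.1 hz
      rw [mem_nthRootsFinset (NeZero.pos N), ← pow_mul, mul_comm, pow_mul, hs.pow_eq_one, one_pow]
    · rw [hs.card_nthRootsFinset, Finset.card_image_of_injOn hs.injOn_pow, Finset.card_range]
  rw [him, Finset.prod_image hs.injOn_pow]
  exact Finset.prod_congr rfl fun i _ => by ring

/-! ### Slot factors -/

/-- Genericity of a spectral parameter `a`: no factor `1 - a qⁿ` vanishes. -/
def Gen (q a : ℂ) : Prop := ∀ n : ℤ, 1 - a * q ^ n ≠ 0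

lemma sq_pow_eq (q : ℂ) (k : ℕ) : (q ^ 2) ^ k = q ^ (2 * (k : ℤ)) := by
  rw [← pow_mul]; exact_mod_cast rfl

lemma sq_inv_pow_eq (q : ℂ) (k : ℕ) : ((q ^ 2)⁻¹) ^ k = q ^ (-(2 * (k : ℤ))) := by
  rw [inv_pow, sq_pow_eq, _root_.zpow_neg]

lemma qsf_up_succ {q : ℂ} (hq0 : q ≠ 0) (a : ℂ) (n : ℤ) (k : ℕ) :
    qsf (a * q ^ n) (q ^ 2) (k + 1) =
      qsf (a * q ^ n) (q ^ 2) k * (1 - a * q ^ (n + 2 * k)) := by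
  rw [qsf_succ, sq_pow_eq, zpow_add₀ hq0, mul_assoc a]

lemma qsf_up_succ' {q : ℂ} (hq0 : q ≠ 0) (a : ℂ) (n : ℤ) (k : ℕ) :
    qsf (a * q ^ n) (q ^ 2) (k + 1) =
      (1 - a * q ^ n) * qsf (a * q ^ (n + 2)) (q ^ 2) k := by
  rw [qsf_succ', zpow_add₀ hq0, mul_assoc a]
  rfl

lemma qsf_down_succ {q : ℂ} (hq0 : q ≠ 0) (a : ℂ) (n : ℤ) (k : ℕ) :
    qsf (a * q ^ n) (q ^ 2)⁻¹ (k + 1) =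
      qsf (a * q ^ n) (q ^ 2)⁻¹ k * (1 - a * q ^ (n - 2 * k)) := by
  rw [qsf_succ, sq_inv_pow_eq, sub_eq_add_neg n, zpow_add₀ hq0, mul_assoc a]

lemma qsf_down_succ' {q : ℂ} (hq0 : q ≠ 0) (a : ℂ) (n : ℤ) (k : ℕ) :
    qsf (a * q ^ n) (q ^ 2)⁻¹ (k + 1) =
      (1 - a * q ^ n) * qsf (a * q ^ (n - 2)) (q ^ 2)⁻¹ k := by
  rw [qsf_succ', sub_eq_add_neg n, zpow_add₀ hq0, mul_assoc a]
  rfl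

lemma Gen.up_ne {q a : ℂ} (hq0 : q ≠ 0) (h : Gen q a) (n : ℤ) (k : ℕ) :
    qsf (a * q ^ n) (q ^ 2) k ≠ 0 := by
  induction k with
  | zero => simp [qsf_zero]
  | succ k ih => rw [qsf_up_succ hq0]; exact mul_ne_zero ih (h _)

/-- The factor of `|x,l⟩` at one tensor slot, as a function of `a = x c*_j`. -/
def site (q a : ℂ) (l : ℤ) (k : ℕ) : ℂ :=
  q ^ (k ^ 2) * (qsf (a * q ^ (-l - 2)) (q ^ 2)⁻¹ k / qsf (a * q ^ (l + 2)) (q ^ 2) k)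

/-- The recursion in `k` expressing that the row `(1, q^l)` times the slot matrix
times the column `(-q^l, 1)` vanishes. -/
lemma site_succ {q a : ℂ} (hq0 : q ≠ 0) (h : Gen q a) (l : ℤ) (k : ℕ) :
    site q a l (k + 1) * (1 - a * q ^ (l + 2 * ((k + 1 : ℕ) : ℤ))) =
      q⁻¹ * q ^ (2 * ((k + 1 : ℕ) : ℤ)) * site q a l k *
        (1 - a * q ^ (-l - 2 * ((k + 1 : ℕ) : ℤ))) := by
  have h1 : q ^ ((k + 1) ^ 2) = q⁻¹ * q ^ (2 * ((k + 1 : ℕ) : ℤ)) * q ^ (k ^ 2) := by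
    rw [← _root_.zpow_neg_one, ← zpow_natCast, ← zpow_natCast, ← zpow_add₀ hq0, ← zpow_add₀ hq0]
    congr 1; push_cast; ring
  have e1 : l + 2 + 2 * (k : ℤ) = l + 2 * ((k + 1 : ℕ) : ℤ) := by push_cast; ring
  have e2 : -l - 2 - 2 * (k : ℤ) = -l - 2 * ((k + 1 : ℕ) : ℤ) := by push_cast; ring
  have := h.up_ne hq0 (l + 2) k
  have := h (l + 2 * ((k + 1 : ℕ) : ℤ))
  rw [site, site, qsf_up_succ hq0, qsf_down_succ hq0, h1, e1, e2]
  field_simp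

/-- The `ω`- and `ω⁻¹`-shifted products over a full period agree, so the slot factor at `k = N`
equals the one at `k = 0`. -/
lemma site_period {N : ℕ} [NeZero N] {q a : ℂ} (hN : IsPrimitiveRoot q N)
    (h2 : IsPrimitiveRoot (q ^ 2) N) (h : Gen q a) (l : ℤ) : site q a l N = 1 := by
  have hq0 := hN.ne_zero (NeZero.ne N)
  have hne := h.up_ne hq0 (l + 2) N
  have hp : ∀ n : ℤ, (a * q ^ n) ^ N = a ^ N := fun n => by
    rw [mul_pow, ← zpow_natCast (q ^ n), ← _root_.zpow_mul, mul_comm n, _root_.zpow_mul, zpow_natCast,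
      hN.pow_eq_one, _root_.one_zpow, mul_one]
  rw [qsf_full h2, hp] at hne
  rw [site, qsf_full h2, qsf_full h2.inv, hp, hp, div_self hne, sq, pow_mul, hN.pow_eq_one,
    one_pow, one_mul]

/-- The eigenvalue of the slot matrix on the column `(-q^l, 1)` is a slot factor of
`|q⁻¹x,l-1⟩`. -/
lemma site_up {q a : ℂ} (hq0 : q ≠ 0) (h : Gen q a) (l : ℤ) (k : ℕ) :
    site q a l k * (1 - a * q ^ (l + 2 * (k : ℤ))) =
      site q (q⁻¹ * a) (l - 1) k * (1 - a * q ^ l) := by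
  have e1 : q⁻¹ * a * q ^ (-(l - 1) - 2) = a * q ^ (-l - 2) := by
    rw [mul_comm q⁻¹, mul_assoc, ← _root_.zpow_neg_one, ← zpow_add₀ hq0]; congr 2; ring
  have e2 : q⁻¹ * a * q ^ (l - 1 + 2) = a * q ^ l := by
    rw [mul_comm q⁻¹, mul_assoc, ← _root_.zpow_neg_one, ← zpow_add₀ hq0]; congr 2; ring
  have h1 := qsf_up_succ hq0 a l k
  rw [qsf_up_succ' hq0] at h1
  have := h.up_ne hq0 (l + 2) k
  have := h.up_ne hq0 l k
  rw [site, site, e1, e2]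
  generalize qsf (a * q ^ (-l - 2)) (q ^ 2)⁻¹ k = A
  field_simp
  linear_combination -A * h1

/-- The eigenvalue of the slot matrix on the row `(1, q^l)` involves a slot factor of
`|qx,l-1⟩`. -/
lemma site_down {q a : ℂ} (hq0 : q ≠ 0) (h : Gen q a) (l : ℤ) (k : ℕ) :
    site q a l k * (1 - a * q ^ (-l)) =
      site q (q * a) (l - 1) k * (1 - a * q ^ (-l - 2 * (k : ℤ))) := by
  have e1 : q * a * q ^ (-(l - 1) - 2) = a * q ^ (-l) := by
    rw [show -l = 1 + (-(l-1)-2) by ring, zpow_add₀ hq0, zpow_one]; ring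
  have e2 : q * a * q ^ (l - 1 + 2) = a * q ^ (l + 2) := by
    rw [show l + 2 = 1 + (l - 1 + 2) by ring, zpow_add₀ hq0 1, zpow_one]; ring_nf
  have h1 := qsf_down_succ hq0 a (-l) k
  rw [qsf_down_succ' hq0] at h1
  have := h.up_ne hq0 (l + 2) k
  rw [site, site, e1, e2]
  generalize qsf (a * q ^ (-l - 2)) (q ^ 2)⁻¹ k = A at *
  generalize qsf (a * q ^ (-l)) (q ^ 2)⁻¹ k = B at *
  field_simp
  linear_combination h1

/-! ### The monodromy matrix on pure tensors -/

lemma emb_mulVec (N L : ℕ) [NeZero N] [NeZero L] (j : ZMod L) (A : Matrix (ZMod N) (ZMod N) ℂ)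
    (F : (ZMod L → ZMod N) → ℂ) (k : ZMod L → ZMod N) :
    (emb N L j A).mulVec F k = ∑ y, A (k j) y * F (Function.update k j y) := by
  symm
  simp only [Matrix.mulVec, dotProduct, emb, Matrix.of_apply]
  apply Finset.sum_of_injOn (fun y => Function.update k j y)
  · intro y _ y' _ hyy
    simpa using congrFun hyy j
  · intro y _; simp
  · intro k' _ hk'
    -- off the line through `k` in direction `j`, some Kronecker delta vanishes
    obtain ⟨i, hij, hi⟩ : ∃ i, i ≠ j ∧ k i ≠ k' i := by
      by_contra! hcon
      apply hk'
      refine ⟨k' j, by simp, ?_⟩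
      funext i
      by_cases hij : i = j
      · subst hij; simp
      · simp [Function.update_of_ne hij, hcon i hij]
    rw [Finset.prod_eq_zero (i := i) (by simp [hij]) (by simp [hi])]
    simp
  · intro y _
    rw [Finset.prod_eq_one]
    · simp
    · intro i hi
      simp [Function.update_of_ne (Finset.ne_of_mem_erase hi)]

/-- A product of operator-valued `2 × 2` matrices sitting at distinct slots, applied to a pure
tensor, is componentwise a product of scalar `2 × 2` matrices. -/
lemma prod_mulVec (N L : ℕ) [NeZero N] [NeZero L]
    (Op : ZMod L → Matrix (Fin 2) (Fin 2) (Matrix (ZMod N) (ZMod N) ℂ))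
    (w : ZMod L → ZMod N → ℂ) (s : List (ZMod L)) (hs : s.Nodup) (a b : Fin 2)
    (k : ZMod L → ZMod N) :
    ((s.map fun j => (Op j).map (emb N L j)).prod a b).mulVec (fun k => ∏ j, w j (k j)) k =
      (s.map fun j => Matrix.of fun a b => (Op j a b).mulVec (w j) (k j)).prod a b *
        ∏ j ∈ Finset.univ \ s.toFinset, w j (k j) := by
  induction s generalizing a k with
  | nil =>
    by_cases hab : a = b
    · subst hab; simp
    · simp [Matrix.one_apply_ne hab]
  | cons j s ih =>
    obtain ⟨hj, hs⟩ := List.nodup_cons.1 hs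
    simp only [List.map_cons, List.prod_cons, Matrix.mul_apply, Matrix.sum_mulVec,
      Finset.sum_apply, Finset.sum_mul]
    refine Finset.sum_congr rfl fun c _ => ?_
    rw [← Matrix.mulVec_mulVec, Matrix.map_apply, emb_mulVec]
    have hsplit : Finset.univ \ s.toFinset = insert j (Finset.univ \ (j :: s).toFinset) := by
      ext i
      by_cases hij : i = j
      · subst hij; simp [hj]
      · simp [hij]
    have hnot : j ∉ Finset.univ \ (j :: s).toFinset := by simp
    have key : ∀ y, ((s.map fun j => (Op j).map (emb N L j)).prod c b).mulVec
          (fun k => ∏ j, w j (k j)) (Function.update k j y) =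
        w j y * ((s.map fun j => Matrix.of fun a b => (Op j a b).mulVec (w j) (k j)).prod c b *
          ∏ i ∈ Finset.univ \ (j :: s).toFinset, w i (k i)) := by
      -- the remaining factors do not involve the `j`-th component
      intro y
      rw [ih hs, hsplit, Finset.prod_insert hnot, Function.update_self]
      have e1 : (s.map fun i => Matrix.of fun a b =>
            (Op i a b).mulVec (w i) (Function.update k j y i)) =
          s.map fun i => Matrix.of fun a b => (Op i a b).mulVec (w i) (k i) := by
        apply List.map_congr_left
        intro i hi
        rw [Function.update_of_ne (by rintro rfl; exact hj hi)]
      have e2 : ∏ i ∈ Finset.univ \ (j :: s).toFinset, w i (Function.update k j y i) =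
          ∏ i ∈ Finset.univ \ (j :: s).toFinset, w i (k i) := by
        refine Finset.prod_congr rfl fun i hi => ?_
        rw [Function.update_of_ne (by rintro rfl; exact hnot hi)]
      rw [e1, e2]
      ring
    simp only [key]
    simp only [← mul_assoc, ← Finset.sum_mul]
    simp only [Matrix.of_apply, Matrix.mulVec, dotProduct]

/-- If every matrix in a list maps the column `(-t, 1)` to a multiple of itself and the row
`(1, t)`, which annihilates that column, to a multiple of itself, then the product has the
products of these eigenvalues as its two eigenvalues. -/
lemma trace_prod_of_triangular {ι : Type*} (s : List ι) (m : ι → Matrix (Fin 2) (Fin 2) ℂ)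
    (t : ℂ) (μ ν : ι → ℂ)
    (h0 : ∀ j, -t * m j 0 0 + m j 0 1 = -t * μ j) (h1 : ∀ j, -t * m j 1 0 + m j 1 1 = μ j)
    (h2 : ∀ j, m j 0 0 + t * m j 1 0 = ν j) :
    (s.map m).prod 0 0 + (s.map m).prod 1 1 = (s.map μ).prod + (s.map ν).prod := by
  have H : -t * (s.map m).prod 0 0 + (s.map m).prod 0 1 = -t * (s.map μ).prod ∧
      -t * (s.map m).prod 1 0 + (s.map m).prod 1 1 = (s.map μ).prod ∧
      (s.map m).prod 0 0 + t * (s.map m).prod 1 0 = (s.map ν).prod := by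
    induction s with
    | nil => simp
    | cons j s ih =>
      obtain ⟨i0, i1, i2⟩ := ih
      simp only [List.map_cons, List.prod_cons, Matrix.mul_apply, Fin.sum_univ_two]
      refine ⟨?_, ?_, ?_⟩
      · linear_combination m j 0 0 * i0 + m j 0 1 * i1 + (s.map μ).prod * h0 j
      · linear_combination m j 1 0 * i0 + m j 1 1 * i1 + (s.map μ).prod * h1 j
      · have h3 : m j 0 1 + t * m j 1 1 = t * ν j := by
          linear_combination h0 j + t * h1 j + t * h2 j
        linear_combination (s.map m).prod 0 0 * h2 j + (s.map m).prod 1 0 * h3 + ν j * i2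
  linear_combination H.2.1 + H.2.2

/-- The transfer matrix on a pure tensor whose slot matrices are all made triangular by the same
gauge `t`: `μ j` is the eigenvalue at slot `j` on the column `(-t, 1)`, `ν j` the one on the row
`(1, t)`. -/
lemma transfer_mulVec_prod (N L : ℕ) [NeZero N] [NeZero L] (ω : ℂ)
    (h : ZMod L → ℂ × ℂ × ℂ × ℂ) (x t : ℂ) (w : ZMod L → ZMod N → ℂ)
    (μ ν : ZMod L → ZMod N → ℂ)
    (h0 : ∀ j κ, -t * (Lop N ω (h j) x 0 0).mulVec (w j) κ +
      (Lop N ω (h j) x 0 1).mulVec (w j) κ = -t * μ j κ)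
    (h1 : ∀ j κ, -t * (Lop N ω (h j) x 1 0).mulVec (w j) κ +
      (Lop N ω (h j) x 1 1).mulVec (w j) κ = μ j κ)
    (h2 : ∀ j κ, (Lop N ω (h j) x 0 0).mulVec (w j) κ +
      t * (Lop N ω (h j) x 1 0).mulVec (w j) κ = ν j κ) (k : ZMod L → ZMod N) :
    (transfer N L ω h x).mulVec (fun k => ∏ j, w j (k j)) k =
      ∏ j, μ j (k j) + ∏ j, ν j (k j) := by
  set s : List (ZMod L) := (List.finRange L).map fun j : Fin L => ((j : ℕ) : ZMod L) with hsdef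
  have hs : s.Nodup := by
    refine List.Nodup.map ?_ (List.nodup_finRange L)
    intro i j hij
    have := congrArg ZMod.val hij
    simp only [ZMod.val_natCast_of_lt i.2, ZMod.val_natCast_of_lt j.2] at this
    exact Fin.ext this
  have hall : s.toFinset = Finset.univ := by
    ext i
    simp only [List.mem_toFinset, Finset.mem_univ, iff_true, hsdef, List.mem_map]
    exact ⟨⟨i.val, ZMod.val_lt i⟩, List.mem_finRange _, by simp⟩
  have hmono : mono N L ω h x = (s.map fun j => (Lop N ω (h j) x).map (emb N L j)).prod := by
    -- in `mono` the index runs over `List.finRange L` coerced monadically to a list of naturals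
    rw [mono, hsdef, List.map_map, bind_pure_comp, List.map_eq_map, List.map_map]
    rfl
  have hp : ∀ f : ZMod L → ℂ, ∏ j, f j = (s.map f).prod := fun f => by
    rw [← hall, List.prod_toFinset f hs]
  rw [transfer, hmono, Matrix.add_mulVec, Pi.add_apply, prod_mulVec N L _ w s hs,
    prod_mulVec N L _ w s hs, hall, Finset.sdiff_self, Finset.prod_empty, mul_one, mul_one, hp, hp]
  exact trace_prod_of_triangular s _ t _ _ (fun j => h0 j (k j)) (fun j => h1 j (k j))
    (fun j => h2 j (k j))

/-! ### The transfer matrix on `|x,l⟩` -/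

/-- The recursion `site_succ` read cyclically in the slot index, including the step from `N - 1`
to `0`. -/
lemma site_cyclic {N : ℕ} [NeZero N] {q a : ℂ} (hN : IsPrimitiveRoot q N)
    (h2 : IsPrimitiveRoot (q ^ 2) N) (h : Gen q a) (l : ℤ) (κ : ZMod N) :
    site q a l κ.val * (1 - a * q ^ (l + 2 * (κ.val : ℤ))) =
      q⁻¹ * q ^ (2 * (κ.val : ℤ)) * site q a l (κ - 1).val *
        (1 - a * q ^ (-l - 2 * (κ.val : ℤ))) := by
  have hq0 := hN.ne_zero (NeZero.ne N)
  rcases hκ : κ.val with _ | k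
  · -- wrap-around: the slot index `0` is reached from `N - 1`
    obtain ⟨k, hk⟩ : ∃ k, N = k + 1 := ⟨N - 1, by have := NeZero.pos N; omega⟩
    have hpred : (κ - 1).val = k := by
      have : κ - 1 = ((k : ℕ) : ZMod N) := by
        have h0 : κ = 0 := by rwa [ZMod.val_eq_zero] at hκ
        have h1 : ((k + 1 : ℕ) : ZMod N) = 0 := by rw [← hk]; simp
        push_cast at h1
        rw [h0]; linear_combination -h1
      rw [this, ZMod.val_natCast_of_lt (by omega)]
    have hs := site_succ hq0 h l k
    have hz : q ^ (2 * (N : ℤ)) = 1 := by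
      rw [mul_comm, _root_.zpow_mul, zpow_natCast, hN.pow_eq_one, _root_.one_zpow]
    have hz1 : q ^ (l + 2 * (N : ℤ)) = q ^ l := by rw [zpow_add₀ hq0, hz, mul_one]
    have hz2 : q ^ (-l - 2 * (N : ℤ)) = q ^ (-l) := by rw [zpow_sub₀ hq0, hz, div_one]
    rw [← hk, hz, hz1, hz2, site_period hN h2 h] at hs
    rw [hpred]
    simpa [site, qsf_zero] using hs
  · have hpred : (κ - 1).val = k := by
      have hlt := ZMod.val_lt κ
      have : κ - 1 = ((k : ℕ) : ZMod N) := by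
        have h0 : κ = ((k + 1 : ℕ) : ZMod N) := by rw [← hκ]; simp
        rw [h0]; push_cast; ring
      rw [this, ZMod.val_natCast_of_lt (by omega)]
    rw [hpred]
    exact site_succ hq0 h l k

lemma ket_eq_prod (N L : ℕ) [NeZero L] (q : ℂ) (cstar : ZMod L → ℂ) (x : ℂ) (l : ℤ) :
    ket N L (q ^ 2) q cstar x l = fun k => ∏ j, site q (x * cstar j) l (k j).val := by
  funext k
  simp only [ket, site, Finset.prod_mul_distrib, Finset.prod_pow_eq_pow_sum]

/-- The transfer matrix sends `|x,l⟩` to a combination of `|q⁻¹x,l-1⟩` and `|qx,l-1⟩`. -/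
lemma transfer_ket (N L : ℕ) [NeZero N] [NeZero L] {q : ℂ} (hN : IsPrimitiveRoot q N)
    (h2 : IsPrimitiveRoot (q ^ 2) N) (cstar : ZMod L → ℂ) (x : ℂ)
    (h : ∀ j, Gen q (x * cstar j)) (l : ℤ) :
    (transfer N L (q ^ 2) (fun j => (q⁻¹, q⁻¹ * cstar j, cstar j, 1)) x).mulVec
        (ket N L (q ^ 2) q cstar x l) =
      (∏ j, (1 - x * cstar j * q ^ l)) • ket N L (q ^ 2) q cstar (q⁻¹ * x) (l - 1) +
      (∏ j, (1 - (x * cstar j) ^ 2) / (1 - x * cstar j * q ^ (-l))) •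
        ket N L (q ^ 2) q cstar (q * x) (l - 1) := by
  have hq0 := hN.ne_zero (NeZero.ne N)
  funext k
  have hX : ∀ (v : ZMod N → ℂ) κ, (Xop N).mulVec v κ = v (κ - 1) := fun v κ => by
    simp [Xop, Matrix.mulVec, dotProduct]
  have hZ : ∀ (v : ZMod N → ℂ) κ, (Zop N (q ^ 2)).mulVec v κ = q ^ (2 * (κ.val : ℤ)) * v κ :=
    fun v κ => by rw [Zop, Matrix.mulVec_diagonal, sq_pow_eq]
  have hY : ∀ (v : ZMod N → ℂ) κ, (Yop N (q ^ 2)).mulVec v κ =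
      q ^ (2 * (κ.val : ℤ)) * v (κ - 1) := fun v κ => by
    rw [Yop, ← Matrix.mulVec_mulVec, hZ, hX]
  have hup : ∀ (j : ZMod L) (κ : ZMod N), site q (x * cstar j) l κ.val *
      (1 - x * cstar j * q ^ (l + 2 * (κ.val : ℤ))) =
      (1 - x * cstar j * q ^ l) * site q (q⁻¹ * x * cstar j) (l - 1) κ.val := fun j κ => by
    rw [site_up hq0 (h j), mul_comm, mul_assoc q⁻¹]
  have hdown : ∀ (j : ZMod L) (κ : ZMod N), site q (x * cstar j) l κ.val *
      (1 - x * cstar j * q ^ (-l)) = site q (q * x * cstar j) (l - 1) κ.val *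
      (1 - x * cstar j * q ^ (-l - 2 * (κ.val : ℤ))) := fun j κ => by
    rw [site_down hq0 (h j), mul_assoc q]
  have hcyc := fun (j : ZMod L) (κ : ZMod N) => site_cyclic hN h2 (h j) l κ
  have hadd : ∀ κ : ZMod N, q ^ (l + 2 * (κ.val : ℤ)) = q ^ l * q ^ (2 * (κ.val : ℤ)) :=
    fun κ => zpow_add₀ hq0 _ _
  have hsub : ∀ κ : ZMod N, q ^ (-l - 2 * (κ.val : ℤ)) = (q ^ l * q ^ (2 * (κ.val : ℤ)))⁻¹ :=
    fun κ => by rw [← hadd, ← _root_.zpow_neg]; congr 1; ring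
  rw [ket_eq_prod, ket_eq_prod, ket_eq_prod,
    transfer_mulVec_prod N L _ _ x (q ^ l) (fun j κ => site q (x * cstar j) l κ.val)
    (fun j κ => (1 - x * cstar j * q ^ l) * site q (q⁻¹ * x * cstar j) (l - 1) κ.val)
    (fun j κ => (1 - (x * cstar j) ^ 2) / (1 - x * cstar j * q ^ (-l)) *
      site q (q * x * cstar j) (l - 1) κ.val)]
  · simp only [Pi.add_apply, Pi.smul_apply, smul_eq_mul, Finset.prod_mul_distrib]
  · intro j κ
    have hc := hcyc j κ
    rw [← hup]
    simp only [Lop, Matrix.of_apply, Matrix.cons_val', Matrix.cons_val_zero, Matrix.cons_val_one,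
      Matrix.cons_val_fin_one, Matrix.smul_mulVec, Pi.smul_apply, smul_eq_mul, hX, hY]
    rw [hsub] at hc
    rw [hadd] at hc ⊢
    have hA : q ^ l ≠ 0 := zpow_ne_zero _ hq0
    have hB : q ^ (2 * (κ.val : ℤ)) ≠ 0 := zpow_ne_zero _ hq0
    generalize q ^ l = A at *
    generalize q ^ (2 * (κ.val : ℤ)) = B at *
    generalize site q (x * cstar j) l κ.val = S at *
    generalize site q (x * cstar j) l (κ - 1).val = S' at *
    field_simp at hc ⊢
    linear_combination hc
  · intro j κ
    rw [← hup]
    simp only [Lop, Matrix.of_apply, Matrix.cons_val', Matrix.cons_val_zero, Matrix.cons_val_one,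
      Matrix.cons_val_fin_one, Matrix.smul_mulVec, Pi.smul_apply, smul_eq_mul, hZ,
      Matrix.one_mulVec, hadd]
    ring
  · intro j κ
    have hc := hcyc j κ
    have hd := hdown j κ
    have hn1 := h j (-l)
    have hn2 := h j (-l - 2 * (κ.val : ℤ))
    simp only [Lop, Matrix.of_apply, Matrix.cons_val', Matrix.cons_val_zero, Matrix.cons_val_one,
      Matrix.cons_val_fin_one, Matrix.smul_mulVec, Pi.smul_apply, smul_eq_mul, hY, hZ]
    rw [div_mul_eq_mul_div, eq_div_iff hn1]
    apply mul_right_cancel₀ hn2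
    have hcan : (q ^ (l + 2 * (κ.val : ℤ))) * q ^ (-l - 2 * (κ.val : ℤ)) = 1 := by
      rw [← zpow_add₀ hq0]; ring_nf; simp
    have ha := hadd κ
    linear_combination (-(1 - x * cstar j * q ^ (-l))) * hc + (1 - (x * cstar j) ^ 2) * hd -
      site q (x * cstar j) l κ.val * (x * cstar j) * (1 - x * cstar j * q ^ (-l)) *
        (1 - x * cstar j * q ^ (-l - 2 * (κ.val : ℤ))) * ha -
      site q (x * cstar j) l κ.val * (x * cstar j) ^ 2 * (1 - x * cstar j * q ^ (-l)) * hcan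

/-! ### Periodicity and the coincidence of the even and odd halves -/

lemma sum_range_shift {A : Type*} [AddCommMonoid A] (N : ℕ) (g : ℕ → A)
    (hg : ∀ n, g (n + N) = g n) (m : ℕ) :
    ∑ n ∈ Finset.range N, g (n + m) = ∑ n ∈ Finset.range N, g n := by
  induction m with
  | zero => rfl
  | succ m ih =>
    rw [← ih]
    rcases N with _ | N
    · simp
    · rw [Finset.sum_range_succ, Finset.sum_range_succ' (fun n => g (n + m))]
      have : g (N + (m + 1)) = g (0 + m) := by
        rw [← hg (0 + m)]; congr 1; ring
      rw [this]
      congr 1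
      exact Finset.sum_congr rfl fun n _ => by congr 1; ring

lemma zpow_period {N : ℕ} [NeZero N] {q : ℂ} (hN : IsPrimitiveRoot q N) (m r : ℤ) :
    q ^ (m + N * r) = q ^ m := by
  rw [zpow_add₀ (hN.ne_zero (NeZero.ne N)), _root_.zpow_mul, zpow_natCast, hN.pow_eq_one,
    _root_.one_zpow, mul_one]

lemma ket_period {N : ℕ} (L : ℕ) [NeZero N] [NeZero L] {q : ℂ} (hN : IsPrimitiveRoot q N)
    (cstar : ZMod L → ℂ) (x : ℂ) (m r : ℤ) :
    ket N L (q ^ 2) q cstar x (m + N * r) = ket N L (q ^ 2) q cstar x m := by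
  have e1 : q ^ (-(m + N * r) - 2) = q ^ (-m - 2) := by
    rw [← zpow_period hN (-m - 2) (-r)]; congr 1; ring
  have e2 : q ^ (m + N * r + 2) = q ^ (m + 2) := by
    rw [← zpow_period hN (m + 2) r]; congr 1; ring
  funext k
  simp only [ket, e1, e2]

lemma Gen.mul_zpow {q a : ℂ} (hq0 : q ≠ 0) (h : Gen q a) (m : ℤ) : Gen q (a * q ^ m) :=
  fun n => by rw [mul_assoc, ← zpow_add₀ hq0]; exact h _

lemma Gen.mul_left {q x c : ℂ} (hq0 : q ≠ 0) (h : Gen q (x * c)) : Gen q (q * x * c) := by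
  have := h.mul_zpow hq0 1
  rwa [zpow_one, mul_comm, ← mul_assoc] at this

lemma Gen.inv_mul_left {q x c : ℂ} (hq0 : q ≠ 0) (h : Gen q (x * c)) : Gen q (q⁻¹ * x * c) := by
  have := h.mul_zpow hq0 (-1)
  rwa [_root_.zpow_neg_one, mul_comm, ← mul_assoc] at this

section main
variable {M : ℕ} {q : ℂ}

lemma sq_pow_half (hN : IsPrimitiveRoot q (2 * M + 1)) : (q ^ 2) ^ (M + 1) = q := by
  rw [← pow_mul, show 2 * (M + 1) = (2 * M + 1) + 1 by ring, pow_succ, hN.pow_eq_one, one_mul]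

lemma fe_period (L : ℕ) [NeZero L] {N : ℕ} [NeZero N] (hN : IsPrimitiveRoot q N)
    (h2 : IsPrimitiveRoot (q ^ 2) N)
    (cstar : ZMod L → ℂ) (x : ℂ) (h : ∀ j, Gen q (x * cstar j)) (n : ℕ) :
    fe L (q ^ 2) cstar x (n + N) = fe L (q ^ 2) cstar x n := by
  refine Finset.prod_congr rfl fun j _ => ?_
  have hne := (h j).up_ne (hN.ne_zero (NeZero.ne N)) 0 N
  rw [zpow_zero, mul_one, qsf_full h2] at hne
  rw [show n + N + 1 = N + (n + 1) by ring, qsf_add _ _ N, qsf_add _ _ N, qsf_full h2, qsf_full h2.inv,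
    h2.pow_eq_one, h2.inv.pow_eq_one, mul_one, mul_div_mul_left _ _ hne]

/-- A shift of `n` by `M + 1` turns the even coefficients into the odd ones, up to a constant. -/
lemma fe_shift (L : ℕ) [NeZero L] (hN : IsPrimitiveRoot q (2 * M + 1))
    (cstar : ZMod L → ℂ) (x : ℂ) (n : ℕ) :
    fe L (q ^ 2) cstar x (n + (M + 1)) =
      fe L (q ^ 2) cstar x M * fo L (q ^ 2) q cstar x n := by
  rw [fe, fe, fo, ← Finset.prod_mul_distrib]
  refine Finset.prod_congr rfl fun j _ => ?_
  rw [show n + (M + 1) + 1 = (M + 1) + (n + 1) by ring, qsf_add _ _ (M + 1) (n + 1),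
    qsf_add _ _ (M + 1) (n + 1), inv_pow (q ^ 2) (M + 1), sq_pow_half hN, mul_div_mul_comm]

/-- The constant in `fe_shift` is `u(x)/u(qx)`. -/
lemma uu_mul_fe (L : ℕ) [NeZero L] (hN : IsPrimitiveRoot q (2 * M + 1))
    (cstar : ZMod L → ℂ) (x : ℂ) (h : ∀ j, Gen q (x * cstar j)) :
    uu (2 * M + 1) M L q cstar (q * x) * fe L (q ^ 2) cstar x M =
      uu (2 * M + 1) M L q cstar x := by
  have hq0 := hN.ne_zero (by omega)
  rw [uu, uu, fe, ← Finset.prod_mul_distrib]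
  refine Finset.prod_congr rfl fun j _ => ?_
  have h0 := h j 0
  rw [zpow_zero, mul_one] at h0
  have h1 := (h j).up_ne hq0 2 M
  have e2 : x * cstar j * q ^ (2 : ℤ) = x * cstar j * q ^ 2 := rfl
  rw [e2] at h1
  have e3 : q * x * cstar j * q = x * cstar j * q ^ 2 := by ring
  -- read backwards, the exponents `-2, …, -2M` are `1, 3, …, 2M-1` modulo `N`
  have e4 : qsf (x * cstar j * (q ^ 2)⁻¹) (q ^ 2)⁻¹ M = qsf (x * cstar j * q) (q ^ 2) M := by
    rw [qsf, qsf, ← Finset.prod_range_reflect]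
    refine Finset.prod_congr rfl fun i hi => ?_
    have hi := Finset.mem_range.1 hi
    have : (q ^ 2)⁻¹ * ((q ^ 2)⁻¹) ^ (M - 1 - i) = q * (q ^ 2) ^ i := by
      rw [← pow_succ', inv_pow]
      apply inv_eq_of_mul_eq_one_right
      rw [mul_left_comm, ← pow_add, ← pow_mul, ← pow_succ', ← hN.pow_eq_one]
      congr 1
      omega
    rw [mul_assoc, this, ← mul_assoc]
  rw [e3, qsf_succ', qsf_succ', e4, mul_pow, hN.pow_eq_one, one_mul]
  field_simp

/-- The two halves of `|x⟩⁺_l` are equal: the substitution `n ↦ n + M + 1` modulo `N` carries the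
even sum to the odd one, since `2(n + M + 1) = 2n + 1 + N`. -/
lemma uu_kete_eq (L : ℕ) [NeZero L] (hN : IsPrimitiveRoot q (2 * M + 1))
    (h2 : IsPrimitiveRoot (q ^ 2) (2 * M + 1))
    (cstar : ZMod L → ℂ) (x : ℂ) (h : ∀ j, Gen q (x * cstar j)) (l : ℤ) :
    (q ^ (-l) * uu (2 * M + 1) M L q cstar (q * x)) • kete (2 * M + 1) L (q ^ 2) q cstar x l =
      uu (2 * M + 1) M L q cstar x • keto (2 * M + 1) L (q ^ 2) q cstar x l := by
  have hq0 := hN.ne_zero (by omega)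
  have hω0 : q ^ 2 ≠ 0 := pow_ne_zero _ hq0
  have hp : ∀ n : ℕ, (q ^ 2) ^ (l * ((n + (2 * M + 1) : ℕ) : ℤ)) = (q ^ 2) ^ (l * (n : ℤ)) :=
    fun n => by
      rw [← zpow_period h2 (l * (n : ℤ)) l]; congr 1; push_cast; ring
  have hh : ∀ n : ℕ, (q ^ 2) ^ (l * ((n + (M + 1) : ℕ) : ℤ)) = q ^ l * (q ^ 2) ^ (l * (n : ℤ)) :=
    fun n => by
      rw [show l * ((n + (M + 1) : ℕ) : ℤ) = ((M + 1 : ℕ) : ℤ) * l + l * n by push_cast; ring,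
        zpow_add₀ hω0, _root_.zpow_mul, zpow_natCast, sq_pow_half hN]
  rw [kete, ← sum_range_shift (2 * M + 1) _ _ (M + 1), keto, Finset.smul_sum, Finset.smul_sum]
  · refine Finset.sum_congr rfl fun n _ => ?_
    have e : (2 * ((n + (M + 1) : ℕ) : ℤ)) = (2 * n + 1) + ((2 * M + 1 : ℕ) : ℤ) * 1 := by
      push_cast; ring
    rw [e, ket_period L hN, fe_shift L hN, hh, ← uu_mul_fe L hN cstar x h, smul_smul, smul_smul]
    congr 1
    have : q ^ (-l) * q ^ l = 1 := by rw [← zpow_add₀ hq0]; simp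
    linear_combination uu (2 * M + 1) M L q cstar (q * x) * fe L (q ^ 2) cstar x M *
      fo L (q ^ 2) q cstar x n * (q ^ 2) ^ (l * (n : ℤ)) * this
  · intro n
    have e : (2 * ((n + (2 * M + 1) : ℕ) : ℤ)) = 2 * n + ((2 * M + 1 : ℕ) : ℤ) * 2 := by
      push_cast; ring
    rw [hp, fe_period L hN h2 cstar x h, e, ket_period L hN]

/-! ### The transfer matrix on `|x⟩ᵒ_l` -/

lemma transfer_keto (L : ℕ) [NeZero L] (hN : IsPrimitiveRoot q (2 * M + 1))
    (h2 : IsPrimitiveRoot (q ^ 2) (2 * M + 1))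
    (cstar : ZMod L → ℂ) (x : ℂ) (h : ∀ j, Gen q (x * cstar j)) (l : ℤ) :
    (transfer (2 * M + 1) L (q ^ 2) (fun j => (q⁻¹, q⁻¹ * cstar j, cstar j, 1)) x).mulVec
        (keto (2 * M + 1) L (q ^ 2) q cstar x l) =
      (∏ j, (1 - x * cstar j * q⁻¹)) • kete (2 * M + 1) L (q ^ 2) q cstar (q⁻¹ * x) l +
      (∏ j, (1 - (x * cstar j) ^ 2) / (1 - x * cstar j * q)) •
        kete (2 * M + 1) L (q ^ 2) q cstar (q * x) l := by
  have hq0 := hN.ne_zero (by omega)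
  rw [keto, kete, kete, Matrix.mulVec_sum, Finset.smul_sum, Finset.smul_sum,
    ← Finset.sum_add_distrib]
  refine Finset.sum_congr rfl fun n _ => ?_
  rw [Matrix.mulVec_smul, transfer_ket _ L hN h2 cstar x h, add_sub_cancel_right, smul_add,
    smul_smul, smul_smul, smul_smul, smul_smul]
  have c1 : ∀ j, q⁻¹ * x * cstar j = x * cstar j * q ^ (-1 : ℤ) := fun j => by
    rw [_root_.zpow_neg_one]; ring
  have c2 : ∀ j, q * x * cstar j = x * cstar j * q ^ (1 : ℤ) := fun j => by
    rw [zpow_one]; ring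
  have c3 : ∀ j, x * cstar j * q⁻¹ = x * cstar j * q ^ (-1 : ℤ) := fun j => by
    rw [_root_.zpow_neg_one]
  have c4 : ∀ j, x * cstar j * q = x * cstar j * q ^ (1 : ℤ) := fun j => by rw [zpow_one]
  congr 2
  · rw [mul_right_comm, ← mul_assoc]
    congr 1
    rw [fo, fe, ← Finset.prod_mul_distrib, ← Finset.prod_mul_distrib]
    refine Finset.prod_congr rfl fun j _ => ?_
    have hu := (h j).up_ne hq0 1 n
    have hv := h j (-1)
    have hw := h j (1 + 2 * n)
    rw [c1, c3, c4, qsf_up_succ hq0 _ 1, qsf_up_succ' hq0 _ (-1), add_comm (2 * (n : ℤ)) 1]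
    norm_num only
    generalize qsf (x * cstar j * q ^ (-1 : ℤ)) (q ^ 2)⁻¹ (n + 1) = A
    generalize qsf (x * cstar j * q ^ (1 : ℤ)) (q ^ 2) n = B at *
    generalize q ^ (-1 : ℤ) = Q at *
    field_simp
  · rw [mul_right_comm, ← mul_assoc]
    congr 1
    rw [fo, fe, ← Finset.prod_mul_distrib, ← Finset.prod_mul_distrib]
    refine Finset.prod_congr rfl fun j _ => ?_
    have hu := (h j).up_ne hq0 1 (n + 1)
    have hv := h j 1
    have hw := h j (-1 - 2 * n)
    rw [c2, c3, c4, qsf_down_succ hq0 _ (-1), qsf_down_succ' hq0 _ 1,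
      show -(2 * (n : ℤ) + 1) = -1 - 2 * n by ring]
    norm_num only
    generalize qsf (x * cstar j * q ^ (-1 : ℤ)) (q ^ 2)⁻¹ n = A
    generalize qsf (x * cstar j * q ^ (1 : ℤ)) (q ^ 2) (n + 1) = B at *
    generalize q ^ (1 : ℤ) = Q at *
    field_simp

/-- The factors of `u(x)` and `u(q²x)` telescope, using `q^{2M+1} = 1` at the end. -/
lemma uu_sq_shift (L : ℕ) [NeZero L] (hN : IsPrimitiveRoot q (2 * M + 1))
    (cstar : ZMod L → ℂ) (x : ℂ) (h : ∀ j, Gen q (x * cstar j)) :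
    uu (2 * M + 1) M L q cstar x * ∏ j, (1 - (x * cstar j) ^ 2) / (1 - x * cstar j * q) =
      (∏ j, (1 + x * cstar j)) * uu (2 * M + 1) M L q cstar (q * (q * x)) := by
  have hq0 := hN.ne_zero (by omega)
  rw [uu, uu, ← Finset.prod_mul_distrib, ← Finset.prod_mul_distrib]
  refine Finset.prod_congr rfl fun j _ => ?_
  have h1 := h j 1
  rw [zpow_one] at h1
  have e1 := qsf_up_succ hq0 (x * cstar j) 1 M
  rw [qsf_up_succ' hq0, zpow_one] at e1
  have e2 : q ^ (1 + 2 * (M : ℤ)) = 1 := by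
    rw [← hN.pow_eq_one, ← zpow_natCast]; congr 1; push_cast; ring
  have e4 : (q * (q * x)) ^ (2 * M + 1) = x ^ (2 * M + 1) := by
    rw [mul_pow, mul_pow, hN.pow_eq_one, one_mul, one_mul]
  have e3 : q * (q * x) * cstar j * q = x * cstar j * q ^ (1 + 2 : ℤ) := by
    rw [show (1 + 2 : ℤ) = ((3 : ℕ) : ℤ) by norm_num, zpow_natCast]; ring
  rw [e2, mul_one] at e1
  rw [e3, e4, mul_div_assoc', div_eq_iff h1]
  linear_combination -(1 + x * cstar j) * (1 - x ^ (2 * M + 1) * cstar j ^ (2 * M + 1)) * e1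

end main

/-- Theorem 1(ii): the normalized transfer matrix acts on `|x⟩⁺_l` by
`q^{−l}T(x)|x⟩⁺_l = |q⁻¹x⟩⁺_l ∏_j(1−xc*_jq⁻¹) + |qx⟩⁺_l ∏_j(1+xc*_j)`. -/
theorem transfer_on_ketp (M L : ℕ) [NeZero L] (hM : 1 ≤ M) (ω : ℂ)
    (hω : IsPrimitiveRoot ω (2 * M + 1)) (q : ℂ) (hq : q = ω ^ (M + 1))
    (cstar : ZMod L → ℂ) (hcs : ∀ j, cstar j ≠ 0) (x : ℂ) (l : ℤ)
    (hdef : allDef (2 * M + 1) L ω q cstar x)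
    (hdefm : allDef (2 * M + 1) L ω q cstar (q⁻¹ * x))
    (hdefp : allDef (2 * M + 1) L ω q cstar (q * x)) :
    q ^ (-l) •
        (transfer (2 * M + 1) L ω (fun j => (q⁻¹, q⁻¹ * cstar j, cstar j, 1)) x).mulVec
          (ketp (2 * M + 1) M L ω q cstar x l) =
      (∏ j : ZMod L, (1 - x * cstar j * q⁻¹)) •
          ketp (2 * M + 1) M L ω q cstar (q⁻¹ * x) l +
        (∏ j : ZMod L, (1 + x * cstar j)) •
          ketp (2 * M + 1) M L ω q cstar (q * x) l := by
  have hqN : IsPrimitiveRoot q (2 * M + 1) := by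
    rw [hq]
    apply hω.pow_of_coprime
    rw [show 2 * M + 1 = M + (M + 1) by ring, Nat.coprime_add_self_right,
      Nat.coprime_comm]
    exact (Nat.coprime_self_add_right (m := M) (n := 1)).2 (Nat.coprime_one_right M)
  have hωq : ω = q ^ 2 := by
    rw [hq, ← pow_mul, show (M + 1) * 2 = (2 * M + 1) + 1 by ring, pow_succ, hω.pow_eq_one,
      one_mul]
  subst hωq
  have hq0 := hqN.ne_zero (by omega)
  have hgen : ∀ j, Gen q (x * cstar j) := fun j n hn => by
    have hne := (hdef.2 j (2 * M) (by omega)).1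
    rw [qsf_full hω] at hne
    have e : (q ^ n) ^ (2 * M + 1) = 1 := by
      rw [← zpow_natCast, ← _root_.zpow_mul, mul_comm, _root_.zpow_mul, zpow_natCast,
        hqN.pow_eq_one, _root_.one_zpow]
    have e' := congrArg (· ^ (2 * M + 1)) (sub_eq_zero.1 hn)
    simp only [one_pow, mul_pow _ (q ^ n), e, mul_one] at e'
    exact hne (sub_eq_zero.2 e')
  have hgenm : ∀ j, Gen q (q⁻¹ * x * cstar j) := fun j => (hgen j).inv_mul_left hq0
  have hgenp : ∀ j, Gen q (q * x * cstar j) := fun j => (hgen j).mul_left hq0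
  -- the two halves of `|x⟩⁺_l` coincide: use the odd form at `x`, the even form at `q^{±1}x`
  rw [ketp, ketp, ketp, uu_kete_eq L hqN hω cstar x hgen,
    ← uu_kete_eq L hqN hω cstar _ hgenm, ← uu_kete_eq L hqN hω cstar _ hgenp,
    mul_inv_cancel_left₀ hq0, Matrix.mulVec_add, Matrix.mulVec_smul,
    transfer_keto L hqN hω cstar x hgen]
  have hu := uu_sq_shift L hqN cstar x hgen
  funext k
  simp only [Pi.add_apply, Pi.smul_apply, smul_eq_mul]
  linear_combination 2 * q ^ (-l) * kete (2 * M + 1) L (q ^ 2) q cstar (q * x) l k * hu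

end
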